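/- (Lemma 1.5(2)) Let f : M → X be a continuous map between topological spaces, where X is Hausdorff and locally compact (every point of X has a compact neighborhood). Then for every subset B ⊆ M, the boundary of the restriction f|_{M \ B} satisfies Bd(f|_{M \ B}) ⊆ (Bd f) ∪ closure(f(B)); explicitly, ⋂_{K} closure(f((M \ B) \ K)) ⊆ (Bd f) ∪ closure(f(B)), where the intersection is over all subsets K of M \ B that are compact (in the subspace topology of M \ B) and all closures are taken in X. -/

import Mathlib

open Set

/-- The boundary of a map `f : M → X`: the intersection, over all compact subsets
`K ⊆ M`, of the closures in `X` of the images `f(M \ K)`. -/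
def mapBd {M X : Type*} [TopologicalSpace M] [TopologicalSpace X] (f : M → X) : Set X :=
  ⋂ (K : Set M) (_ : IsCompact K), closure (f '' Kᶜ)

/-!
The boundary of `f` consists of the cluster points of `f` along the cocompact filter of `M`. If a
boundary point `x` of `f|_{M \ B}` lies outside `closure (f(B))`, choose a closed neighborhood `V`
of `x` disjoint from `f(B)`. The closed set `f⁻¹(V)` is contained in `M \ B`, so it meets each
compact subset of `M` in a compact subset of `M \ B`: within `f⁻¹(V)`, leaving all compact subsets
of `M \ B` forces leaving all compact subsets of `M`. Hence `x` is a boundary point of `f`.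
-/

open Filter Topology

section ClusterPoints

variable {α X : Type*} [TopologicalSpace X] {l : Filter α} {g : α → X} {x : X}

theorem mapClusterPt_inf_principal_preimage_iff {V : Set X} (hV : V ∈ 𝓝 x) :
    MapClusterPt x (l ⊓ 𝓟 (g ⁻¹' V)) g ↔ MapClusterPt x l g := by
  refine ⟨fun h ↦ h.mono inf_le_left, fun h ↦ ?_⟩
  rw [mapClusterPt_iff_frequently] at h ⊢
  intro U hU
  rw [frequently_inf_principal]
  exact (h (U ∩ V) (inter_mem hU hV)).mono fun _ ha ↦ ha.symm

end ClusterPoints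

section Boundary

variable {A M X : Type*} [TopologicalSpace A] [TopologicalSpace M] [TopologicalSpace X]
  {e : A → M} {f : M → X} {x : X}

theorem tendsto_cocompact_inf_principal_preimage (he : IsInducing e) {C : Set M}
    (hC : IsClosed C) (hCe : C ⊆ range e) :
    Tendsto e (cocompact A ⊓ 𝓟 (e ⁻¹' C)) (cocompact M) := by
  refine hasBasis_cocompact.tendsto_right_iff.2 fun K hK ↦ ?_
  have hKC : IsCompact (e ⁻¹' (K ∩ C)) :=
    he.isCompact_preimage' (hK.inter_right hC) (inter_subset_right.trans hCe)
  rw [eventually_inf_principal]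
  filter_upwards [hKC.compl_mem_cocompact] with a haKC haC haK using haKC ⟨haK, haC⟩

theorem mem_mapBd_iff_mapClusterPt : x ∈ mapBd f ↔ MapClusterPt x (cocompact M) f := by
  simp only [mapBd, mem_iInter]
  exact (hasBasis_cocompact.map f).clusterPt_iff_forall_mem_closure.symm

theorem mem_mapBd_of_mem_mapBd_comp (he : IsInducing e) {V : Set X} (hV : V ∈ 𝓝 x)
    (hfV : IsClosed (f ⁻¹' V)) (hVe : f ⁻¹' V ⊆ range e) (hx : x ∈ mapBd (f ∘ e)) :
    x ∈ mapBd f := by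
  rw [mem_mapBd_iff_mapClusterPt] at hx ⊢
  exact ((mapClusterPt_inf_principal_preimage_iff hV).2 hx).of_comp
    (tendsto_cocompact_inf_principal_preimage he hfV hVe)

theorem mapBd_comp_subset [RegularSpace X] (hf : Continuous f) (he : IsInducing e) :
    mapBd (f ∘ e) ⊆ mapBd f ∪ closure (f '' (range e)ᶜ) := by
  intro x hx
  refine or_iff_not_imp_right.2 fun hxe ↦ ?_
  obtain ⟨V, hV, hVclosed, hVe⟩ :=
    exists_mem_nhds_isClosed_subset (isClosed_closure.isOpen_compl.mem_nhds hxe)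
  have hfV : f ⁻¹' V ⊆ range e := fun y hyV ↦
    by_contra fun hye ↦ hVe hyV (subset_closure (mem_image_of_mem f hye))
  exact mem_mapBd_of_mem_mapBd_comp he hV (hVclosed.preimage hf) hfV hx

theorem mapBd_comp_val (f : M → X) (S : Set M) :
    mapBd (f ∘ ((↑) : S → M)) =
      ⋂ (K : Set M) (_ : K ⊆ S) (_ : IsCompact K), closure (f '' (S \ K)) := by
  have image_compl (K : Set M) : f ∘ ((↑) : S → M) '' ((↑) ⁻¹' K)ᶜ = f '' (S \ K) := by
    rw [image_comp, ← preimage_compl, Subtype.image_preimage_coe, sdiff_eq]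
  refine Subset.antisymm (subset_iInter₂ fun K hKS ↦ subset_iInter fun hK ↦ ?_)
    (subset_iInter₂ fun L hL ↦ ?_)
  · rw [← image_compl]
    exact iInter₂_subset _
      (IsInducing.subtypeVal.isCompact_preimage' hK (hKS.trans_eq Subtype.range_coe.symm))
  · rw [← preimage_image_eq L Subtype.val_injective, image_compl]
    exact iInter_subset_of_subset _ (iInter₂_subset (Subtype.coe_image_subset S L)
      (hL.image continuous_subtype_val))

end Boundary

theorem mapBd_restriction_subset_general
    {M X : Type*} [TopologicalSpace M] [TopologicalSpace X] [RegularSpace X]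
    (f : M → X) (hf : Continuous f) (B : Set M) :
    (⋂ (K : Set M) (_ : K ⊆ Bᶜ) (_ : IsCompact K), closure (f '' (Bᶜ \ K)))
      ⊆ mapBd f ∪ closure (f '' B) := by
  rw [← mapBd_comp_val]
  simpa only [Subtype.range_coe, compl_compl] using
    mapBd_comp_subset hf (IsInducing.subtypeVal (t := Bᶜ))

theorem mapBd_restriction_subset
    {M X : Type*} [TopologicalSpace M] [TopologicalSpace X] [T2Space X]
    (f : M → X) (hf : Continuous f)
    (hloc : ∀ x : X, ∃ K ∈ nhds x, IsCompact K)
    (B : Set M) :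
    (⋂ (K : Set M) (_ : K ⊆ Bᶜ) (_ : IsCompact K), closure (f '' (Bᶜ \ K)))
      ⊆ mapBd f ∪ closure (f '' B) := by
  have : WeaklyLocallyCompactSpace X :=
    ⟨fun x ↦ (hloc x).imp fun _ hK ↦ hK.symm⟩
  exact mapBd_restriction_subset_general f hf B
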